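/- arXiv:1512.08712 — 2 statements merged into one kernel-verified Lean document; each statement's English description precedes it below -/
import Mathlib

section
/- Let R be an invertible n²×n² matrix over k satisfying the quantum Yang–Baxter equation, and suppose R^{t₂} and (R⁻¹)^{t₁} are invertible. Then: (i) R₁₃·((R^{t₂})⁻¹)₁₂·(((R⁻¹)^{t₁})⁻¹)₂₃ = (((R⁻¹)^{t₁})⁻¹)₂₃·((R^{t₂})⁻¹)₁₂·R₁₃; (ii) R₂₃·(((R⁻¹)^{t₁})⁻¹)₁₂·(((R⁻¹)^{t₁})⁻¹)₁₃ = (((R⁻¹)^{t₁})⁻¹)₁₃·(((R⁻¹)^{t₁})⁻¹)₁₂·R₂₃. -/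
open Matrix

/-- Partial transpose in the first factor: `(M^{t₁})^{(i,j)}_{(k,l)} = M^{(k,j)}_{(i,l)}`. -/
def pt1 {α : Type*} {n : ℕ} (M : Matrix (Fin n × Fin n) (Fin n × Fin n) α) :
    Matrix (Fin n × Fin n) (Fin n × Fin n) α :=
  Matrix.of fun p q => M (q.1, p.2) (p.1, q.2)

/-- Partial transpose in the second factor: `(M^{t₂})^{(i,j)}_{(k,l)} = M^{(i,l)}_{(k,j)}`. -/
def pt2 {α : Type*} {n : ℕ} (M : Matrix (Fin n × Fin n) (Fin n × Fin n) α) :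
    Matrix (Fin n × Fin n) (Fin n × Fin n) α :=
  Matrix.of fun p q => M (p.1, q.2) (q.1, p.2)

/-- `M₁₂` acting on triples: `(M₁₂)^{(i,j,m)}_{(k,l,p)} = M^{(i,j)}_{(k,l)} δ_{mp}`. -/
def L12 {α : Type*} [Semiring α] {n : ℕ} (M : Matrix (Fin n × Fin n) (Fin n × Fin n) α) :
    Matrix (Fin n × Fin n × Fin n) (Fin n × Fin n × Fin n) α :=
  Matrix.of fun a b => if a.2.2 = b.2.2 then M (a.1, a.2.1) (b.1, b.2.1) else 0

/-- `M₂₃` acting on triples: `(M₂₃)^{(m,i,j)}_{(p,k,l)} = δ_{mp} M^{(i,j)}_{(k,l)}`. -/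
def L23 {α : Type*} [Semiring α] {n : ℕ} (M : Matrix (Fin n × Fin n) (Fin n × Fin n) α) :
    Matrix (Fin n × Fin n × Fin n) (Fin n × Fin n × Fin n) α :=
  Matrix.of fun a b => if a.1 = b.1 then M (a.2.1, a.2.2) (b.2.1, b.2.2) else 0

/-- `M₁₃` acting on triples: `(M₁₃)^{(i,m,j)}_{(k,p,l)} = δ_{mp} M^{(i,j)}_{(k,l)}`. -/
def L13 {α : Type*} [Semiring α] {n : ℕ} (M : Matrix (Fin n × Fin n) (Fin n × Fin n) α) :
    Matrix (Fin n × Fin n × Fin n) (Fin n × Fin n × Fin n) α :=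
  Matrix.of fun a b => if a.2.1 = b.2.1 then M (a.1, a.2.2) (b.1, b.2.2) else 0

section aux
variable {k : Type*} [CommRing k] {n : ℕ}

lemma L12_mul (M N : Matrix (Fin n × Fin n) (Fin n × Fin n) k) :
    L12 (M * N) = L12 M * L12 N := by
  ext ⟨a, b, c⟩ ⟨d, e, f⟩
  by_cases h : c = f <;> simp [L12, Matrix.mul_apply, Fintype.sum_prod_type, ite_and, h]

lemma L23_mul (M N : Matrix (Fin n × Fin n) (Fin n × Fin n) k) :
    L23 (M * N) = L23 M * L23 N := by
  ext ⟨a, b, c⟩ ⟨d, e, f⟩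
  by_cases h : a = d <;> simp [L23, Matrix.mul_apply, Fintype.sum_prod_type, h]

lemma L13_mul (M N : Matrix (Fin n × Fin n) (Fin n × Fin n) k) :
    L13 (M * N) = L13 M * L13 N := by
  ext ⟨a, b, c⟩ ⟨d, e, f⟩
  by_cases h : b = e <;> simp [L13, Matrix.mul_apply, Fintype.sum_prod_type, h]

lemma L12_one : L12 (1 : Matrix (Fin n × Fin n) (Fin n × Fin n) k) = 1 := by
  ext ⟨a, b, c⟩ ⟨d, e, f⟩
  simp only [L12, Matrix.of_apply, Matrix.one_apply, Prod.mk.injEq]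
  split_ifs <;> simp_all

lemma L23_one : L23 (1 : Matrix (Fin n × Fin n) (Fin n × Fin n) k) = 1 := by
  ext ⟨a, b, c⟩ ⟨d, e, f⟩
  simp only [L23, Matrix.of_apply, Matrix.one_apply, Prod.mk.injEq]
  split_ifs <;> simp_all

lemma L13_one : L13 (1 : Matrix (Fin n × Fin n) (Fin n × Fin n) k) = 1 := by
  ext ⟨a, b, c⟩ ⟨d, e, f⟩
  simp only [L13, Matrix.of_apply, Matrix.one_apply, Prod.mk.injEq]
  split_ifs <;> simp_all

/-- transpose in the second of three factors -/
def T2 (M : Matrix (Fin n × Fin n × Fin n) (Fin n × Fin n × Fin n) k) :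
    Matrix (Fin n × Fin n × Fin n) (Fin n × Fin n × Fin n) k :=
  Matrix.of fun a b => M (a.1, b.2.1, a.2.2) (b.1, a.2.1, b.2.2)

/-- transpose in the first of three factors -/
def T1 (M : Matrix (Fin n × Fin n × Fin n) (Fin n × Fin n × Fin n) k) :
    Matrix (Fin n × Fin n × Fin n) (Fin n × Fin n × Fin n) k :=
  Matrix.of fun a b => M (b.1, a.2.1, a.2.2) (a.1, b.2.1, b.2.2)

variable (X Y Z : Matrix (Fin n × Fin n) (Fin n × Fin n) k)

lemma T2_a : T2 (L12 Y * L23 X * L13 Z) = L23 (pt1 X) * L12 (pt2 Y) * L13 Z := by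
  ext ⟨a, b, c⟩ ⟨d, e, f⟩
  simp [T2, L12, L23, L13, pt1, pt2, Matrix.mul_apply, Fintype.sum_prod_type]
  simp only [Finset.sum_mul]
  refine Finset.sum_congr rfl fun _ _ => Finset.sum_congr rfl fun _ _ => Finset.sum_congr rfl fun _ _ => ?_
  ring

lemma T2_b : T2 (L13 Z * L23 X * L12 Y) = L13 Z * L12 (pt2 Y) * L23 (pt1 X) := by
  ext ⟨a, b, c⟩ ⟨d, e, f⟩
  simp [T2, L12, L23, L13, pt1, pt2, Matrix.mul_apply, Fintype.sum_prod_type]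
  simp only [Finset.sum_mul]
  rw [Finset.sum_comm]
  refine Finset.sum_congr rfl fun _ _ => ?_
  rw [Finset.sum_comm]
  refine Finset.sum_congr rfl fun _ _ => Finset.sum_congr rfl fun _ _ => ?_
  ring

lemma T1_a : T1 (L12 Y * L13 Z * L23 X) = L13 (pt1 Z) * L12 (pt1 Y) * L23 X := by
  ext ⟨a, b, c⟩ ⟨d, e, f⟩
  simp [T1, L12, L23, L13, pt1, pt2, Matrix.mul_apply, Fintype.sum_prod_type]
  simp only [Finset.sum_mul]
  refine Finset.sum_congr rfl fun _ _ => Finset.sum_congr rfl fun _ _ => Finset.sum_congr rfl fun _ _ => ?_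
  ring

lemma T1_b : T1 (L23 X * L13 Z * L12 Y) = L23 X * L12 (pt1 Y) * L13 (pt1 Z) := by
  ext ⟨a, b, c⟩ ⟨d, e, f⟩
  simp [T1, L12, L23, L13, pt1, pt2, Matrix.mul_apply, Fintype.sum_prod_type]
  simp only [Finset.sum_mul]
  refine Finset.sum_congr rfl fun _ _ => ?_
  rw [Finset.sum_comm]
  refine Finset.sum_congr rfl fun _ _ => Finset.sum_congr rfl fun _ _ => ?_
  ring

/-- inverting an identity between triple products -/
lemma inv3 {A : Type*} [Monoid A] {a b c a' b' c' : A}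
    (ha : a * a' = 1) (ha' : a' * a = 1) (hb : b * b' = 1) (hb' : b' * b = 1)
    (hc : c * c' = 1) (hc' : c' * c = 1) (h : a * b * c = c * b * a) :
    c' * b' * a' = a' * b' * c' := by
  let ua : Aˣ := ⟨a, a', ha, ha'⟩
  let ub : Aˣ := ⟨b, b', hb, hb'⟩
  let uc : Aˣ := ⟨c, c', hc, hc'⟩
  have h1 : ua * ub * uc = uc * ub * ua := Units.ext h
  have h2 := congrArg (fun u : Aˣ => ((u⁻¹ : Aˣ) : A)) h1
  simpa [mul_assoc, ua, ub, uc] using h2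

lemma rot3 {A : Type*} [Monoid A] {a b c b' c' : A}
    (hb : b * b' = 1) (hb' : b' * b = 1)
    (hc : c * c' = 1) (hc' : c' * c = 1) (h : a * b * c = c * b * a) :
    a * c' * b' = b' * c' * a := by
  calc a * c' * b' = b' * (c' * c) * b * a * c' * b' := by simp [hc', hb']
    _ = b' * c' * (c * b * a) * c' * b' := by simp only [mul_assoc]
    _ = b' * c' * a * (b * (c * c') * b') := by rw [← h]; simp only [mul_assoc]
    _ = _ := by simp [hc, hb]

end aux

/-- if `R` is an invertible solution of the QYBE with `R^{t₂}` and `(R⁻¹)^{t₁}`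
invertible, then
(i) `R₁₃·((R^{t₂})⁻¹)₁₂·(((R⁻¹)^{t₁})⁻¹)₂₃ = (((R⁻¹)^{t₁})⁻¹)₂₃·((R^{t₂})⁻¹)₁₂·R₁₃`;
(ii) `R₂₃·(((R⁻¹)^{t₁})⁻¹)₁₂·(((R⁻¹)^{t₁})⁻¹)₁₃ = (((R⁻¹)^{t₁})⁻¹)₁₃·(((R⁻¹)^{t₁})⁻¹)₁₂·R₂₃`. -/
theorem stmt2 {k : Type*} [CommRing k] {n : ℕ} (hn : 0 < n)
    (R : Matrix (Fin n × Fin n) (Fin n × Fin n) k)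
    (hR : IsUnit R)
    (hQYBE : L12 R * L13 R * L23 R = L23 R * L13 R * L12 R)
    (ht2 : IsUnit (pt2 R)) (ht1 : IsUnit (pt1 R⁻¹)) :
    (L13 R * L12 (pt2 R)⁻¹ * L23 (pt1 R⁻¹)⁻¹ = L23 (pt1 R⁻¹)⁻¹ * L12 (pt2 R)⁻¹ * L13 R) ∧
    (L23 R * L12 (pt1 R⁻¹)⁻¹ * L13 (pt1 R⁻¹)⁻¹ = L13 (pt1 R⁻¹)⁻¹ * L12 (pt1 R⁻¹)⁻¹ * L23 R) := by
  have r1 : R * R⁻¹ = 1 := Matrix.mul_nonsing_inv _ ((Matrix.isUnit_iff_isUnit_det _).1 hR)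
  have r2 : R⁻¹ * R = 1 := Matrix.nonsing_inv_mul _ ((Matrix.isUnit_iff_isUnit_det _).1 hR)
  have a1 := Matrix.mul_nonsing_inv _ ((Matrix.isUnit_iff_isUnit_det _).1 ht2)
  have a2 := Matrix.nonsing_inv_mul _ ((Matrix.isUnit_iff_isUnit_det _).1 ht2)
  have b1 := Matrix.mul_nonsing_inv _ ((Matrix.isUnit_iff_isUnit_det _).1 ht1)
  have b2 := Matrix.nonsing_inv_mul _ ((Matrix.isUnit_iff_isUnit_det _).1 ht1)
  have e12 : ∀ {M N : Matrix (Fin n × Fin n) (Fin n × Fin n) k}, M * N = 1 →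
      L12 M * L12 N = 1 := fun h => by rw [← L12_mul, h, L12_one]
  have e13 : ∀ {M N : Matrix (Fin n × Fin n) (Fin n × Fin n) k}, M * N = 1 →
      L13 M * L13 N = 1 := fun h => by rw [← L13_mul, h, L13_one]
  have e23 : ∀ {M N : Matrix (Fin n × Fin n) (Fin n × Fin n) k}, M * N = 1 →
      L23 M * L23 N = 1 := fun h => by rw [← L23_mul, h, L23_one]
  constructor
  · have h1 := rot3 (e13 r1) (e13 r2) (e23 r1) (e23 r2) hQYBE
    have h2 := congrArg T2 h1
    rw [T2_a, T2_b] at h2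
    exact inv3 (e23 b1) (e23 b2) (e12 a1) (e12 a2) (e13 r2) (e13 r1) h2
  · have h1 := inv3 (e12 r1) (e12 r2) (e13 r1) (e13 r2) (e23 r1) (e23 r2) hQYBE
    have h2 := congrArg T1 h1.symm
    rw [T1_a, T1_b] at h2
    exact inv3 (e13 b1) (e13 b2) (e12 b1) (e12 b2) (e23 r2) (e23 r1) h2
end

section
/- Let R be an invertible n²×n² matrix over k, and let T, T̃ be n×n matrices over S satisfying T·T̃ᵗ = T̃ᵗ·T = I in Mₙ(S). Then Rᵗ·T̃₁·T̃₂ = T̃₂·T̃₁·Rᵗ if and only if (R⁻¹)^{t₁}·T̃₁·T₂ = T₂·T̃₁·(R⁻¹)^{t₁}. -/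
open Matrix

/-- For an `n×n` matrix `m` over `S`, the `n²×n²` matrix `m₁` with entries
`(m₁)^{(i,j)}_{(k,l)} = m^i_k δ_{jl}`. -/
def matLift1 {S : Type*} [Semiring S] {n : ℕ} (m : Matrix (Fin n) (Fin n) S) :
    Matrix (Fin n × Fin n) (Fin n × Fin n) S :=
  Matrix.of fun p q => if p.2 = q.2 then m p.1 q.1 else 0

/-- For an `n×n` matrix `m` over `S`, the `n²×n²` matrix `m₂` with entries
`(m₂)^{(i,j)}_{(k,l)} = δ_{ik} m^j_l`. -/
def matLift2 {S : Type*} [Semiring S] {n : ℕ} (m : Matrix (Fin n) (Fin n) S) :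
    Matrix (Fin n × Fin n) (Fin n × Fin n) S :=
  Matrix.of fun p q => if p.1 = q.1 then m p.2 q.2 else 0

theorem aux_pt2_inj {α : Type*} {n : ℕ} {M N : Matrix (Fin n × Fin n) (Fin n × Fin n) α}
    (h : pt2 M = pt2 N) : M = N := by
  ext ⟨i, j⟩ ⟨a, b⟩
  exact congrFun (congrFun h (i, b)) (a, j)

theorem aux_lift2_mul {S : Type*} [Ring S] {n : ℕ} (A B : Matrix (Fin n) (Fin n) S)
    (h : A * B = 1) : matLift2 A * matLift2 B = 1 := by
  ext ⟨i, j⟩ ⟨a, b⟩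
  have := congrFun (congrFun h j) b
  rw [Matrix.mul_apply] at this
  by_cases hia : i = a
  · subst hia
    simp [matLift2, Matrix.mul_apply, Fintype.sum_prod_type, this, Matrix.one_apply]
  · simp [matLift2, Matrix.mul_apply, Fintype.sum_prod_type, Matrix.one_apply, hia]

theorem aux_left {k S : Type*} [CommRing k] [Ring S] [Algebra k S] {n : ℕ}
    (Q : Matrix (Fin n × Fin n) (Fin n × Fin n) k) (U : Matrix (Fin n) (Fin n) S) :
    pt2 (matLift1 U * matLift2 U * (Qᵀ).map (algebraMap k S)) =
      matLift1 U * (pt1 Q).map (algebraMap k S) * matLift2 Uᵀ := by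
  ext ⟨i, l⟩ ⟨c, j⟩
  simp only [pt2, pt1, matLift1, matLift2, Matrix.mul_apply, Fintype.sum_prod_type,
    Matrix.of_apply, Matrix.map_apply, Matrix.transpose_apply, ite_mul, mul_ite, zero_mul,
    mul_zero, Finset.sum_ite_eq, Finset.sum_ite_eq', Finset.mem_univ, if_true, Finset.sum_const_zero,
    Finset.sum_ite_irrel]
  rw [Finset.sum_comm]
  refine Finset.sum_congr rfl fun b _ => ?_
  rw [Finset.sum_mul]
  refine Finset.sum_congr rfl fun a _ => ?_
  rw [mul_assoc, mul_assoc, Algebra.commutes]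

theorem aux_right {k S : Type*} [CommRing k] [Ring S] [Algebra k S] {n : ℕ}
    (Q : Matrix (Fin n × Fin n) (Fin n × Fin n) k) (U : Matrix (Fin n) (Fin n) S) :
    pt2 ((Qᵀ).map (algebraMap k S) * (matLift2 U * matLift1 U)) =
      matLift2 Uᵀ * (pt1 Q).map (algebraMap k S) * matLift1 U := by
  ext ⟨i, l⟩ ⟨c, j⟩
  simp only [pt2, pt1, matLift1, matLift2, Matrix.mul_apply, Fintype.sum_prod_type,
    Matrix.of_apply, Matrix.map_apply, Matrix.transpose_apply, ite_mul, mul_ite, zero_mul,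
    mul_zero, Finset.sum_ite_eq, Finset.sum_ite_eq', Finset.mem_univ, if_true, Finset.sum_const_zero,
    Finset.sum_ite_irrel]
  refine Finset.sum_congr rfl fun a _ => ?_
  rw [Finset.sum_mul]
  refine Finset.sum_congr rfl fun b _ => ?_
  rw [← mul_assoc, Algebra.commutes]

theorem aux_conj {M : Type*} [Monoid M] {a b x y : M} (h : a * b = 1) (h' : b * a = 1) :
    a * x = y * a ↔ x * b = b * y := by
  constructor
  · intro e
    calc x * b = b * (a * x) * b := by rw [← mul_assoc, h', one_mul]
      _ = b * y * (a * b) := by rw [e]; simp only [mul_assoc]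
      _ = b * y := by rw [h, mul_one]
  · intro e
    calc a * x = a * (x * b) * a := by rw [mul_assoc, mul_assoc, h', mul_one]
      _ = (a * b) * y * a := by rw [e]; simp only [mul_assoc]
      _ = y * a := by rw [h, one_mul]

/-- for `R` invertible over `k` and `T`, `T̃` over `S` with
`T·T̃ᵗ = T̃ᵗ·T = I`:
`Rᵗ·T̃₁·T̃₂ = T̃₂·T̃₁·Rᵗ ↔ (R⁻¹)^{t₁}·T̃₁·T₂ = T₂·T̃₁·(R⁻¹)^{t₁}`. -/
theorem stmt9 {k S : Type*} [CommRing k] [Ring S] [Algebra k S] {n : ℕ} (hn : 0 < n)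
    (R : Matrix (Fin n × Fin n) (Fin n × Fin n) k) (hR : IsUnit R)
    (T Ttil : Matrix (Fin n) (Fin n) S)
    (h1 : T * Ttilᵀ = 1) (h2 : Ttilᵀ * T = 1) :
    (Rᵀ).map (algebraMap k S) * matLift1 Ttil * matLift2 Ttil =
        matLift2 Ttil * matLift1 Ttil * (Rᵀ).map (algebraMap k S) ↔
      (pt1 R⁻¹).map (algebraMap k S) * matLift1 Ttil * matLift2 T =
        matLift2 T * matLift1 Ttil * (pt1 R⁻¹).map (algebraMap k S) := by
  have hd : IsUnit R.det := (Matrix.isUnit_iff_isUnit_det R).1 hR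
  have e1 : (Rᵀ).map (algebraMap k S) * (R⁻¹ᵀ).map (algebraMap k S) = 1 := by
    rw [← Matrix.map_mul, ← Matrix.transpose_mul, Matrix.nonsing_inv_mul R hd]
    simp
  have e2 : (R⁻¹ᵀ).map (algebraMap k S) * (Rᵀ).map (algebraMap k S) = 1 := by
    rw [← Matrix.map_mul, ← Matrix.transpose_mul, Matrix.mul_nonsing_inv R hd]
    simp
  have f1 := aux_lift2_mul _ _ h1
  have f2 := aux_lift2_mul _ _ h2
  rw [mul_assoc, aux_conj e1 e2]
  have key : matLift1 Ttil * matLift2 Ttil * (R⁻¹ᵀ).map (algebraMap k S) =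
      (R⁻¹ᵀ).map (algebraMap k S) * (matLift2 Ttil * matLift1 Ttil) ↔
      matLift1 Ttil * (pt1 R⁻¹).map (algebraMap k S) * matLift2 Ttilᵀ =
      matLift2 Ttilᵀ * ((pt1 R⁻¹).map (algebraMap k S) * matLift1 Ttil) := by
    rw [← aux_left, ← mul_assoc (matLift2 Ttilᵀ), ← aux_right]
    exact ⟨fun h => by rw [h], aux_pt2_inj⟩
  rw [key, ← aux_conj f1 f2, mul_assoc (matLift2 T)]
  exact eq_comm
end
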